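/- The map Δ satisfies: (i) Δ is continuous on (0, +∞)²; (ii) Δ is monotone, in the sense that if Δ(t₀, x₀) = (0, p₀) and Δ(t₀, x₀′) = (0, p₀′) with 0 < x₀ < x₀′, then p₀ < p₀′; (iii) for every x ∈ (0, +∞), Δ(t, x) → (x, 2) as t → 0⁺. -/

import Mathlib

open Real Set Filter MeasureTheory
open scoped Topology

/-- The potential `g` from the Hamiltonian `H(x,p) = p²/2 + g(x)`. -/
noncomputable def g (x : ℝ) : ℝ := if |x| ≤ 1 then 1 - (1 - x ^ 2) ^ 4 else 1

/-- The derivative of `g`. -/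
noncomputable def g' (x : ℝ) : ℝ := if |x| ≤ 1 then 8 * x * (1 - x ^ 2) ^ 3 else 0

/-- `(q, p)` is a (global) solution of the Hamiltonian system (HS): `q̇ = p`, `ṗ = -g'(q)`. -/
def IsHSSol (q p : ℝ → ℝ) : Prop :=
  (∀ t : ℝ, HasDerivAt q (p t) t) ∧ (∀ t : ℝ, HasDerivAt p (-(g' (q t))) t)

/-- `F` is the flow of (HS): `F t q₀ p₀ = (q t, p t)` for the solution with data `(q₀, p₀)`. -/
def IsHSFlow (F : ℝ → ℝ → ℝ → ℝ × ℝ) : Prop :=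
  ∀ q₀ p₀ : ℝ,
    IsHSSol (fun t => (F t q₀ p₀).1) (fun t => (F t q₀ p₀).2) ∧ F 0 q₀ p₀ = (q₀, p₀)

/-- The set `([0,∞) × {2}) ∪ ({0} × (0,2])`, codomain of the map `Δ`. -/
def Dset : Set (ℝ × ℝ) := (Ici (0:ℝ) ×ˢ ({2} : Set ℝ)) ∪ ({(0:ℝ)} ×ˢ Ioc (0:ℝ) 2)

/-- `T` is the smallest positive period of `q`. -/
def IsSmallestPeriod (q : ℝ → ℝ) (T : ℝ) : Prop :=
  0 < T ∧ Function.Periodic q T ∧ ∀ T' : ℝ, 0 < T' → Function.Periodic q T' → T ≤ T'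

/-- `T` is the period map `𝒯`, assigning to `p₀ ∈ (0, √2)` the smallest positive period of
the `q`-component of the solution of (HS) with initial datum `(0, p₀)`. -/
def IsPeriodMap (F : ℝ → ℝ → ℝ → ℝ × ℝ) (T : ℝ → ℝ) : Prop :=
  ∀ p₀ ∈ Ioo (0:ℝ) (Real.sqrt 2), IsSmallestPeriod (fun t => (F t 0 p₀).1) (T p₀)

/-- `Δ` associates to `(t,x)` the datum in `Dset` whose orbit stays positive on `(0,t)`
and reaches `x` at time `t`. -/
def IsDeltaMap (F : ℝ → ℝ → ℝ → ℝ × ℝ) (Δ : ℝ → ℝ → ℝ × ℝ) : Prop :=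
  ∀ t x : ℝ, 0 < t → 0 < x →
    Δ t x ∈ Dset ∧ (F t (Δ t x).1 (Δ t x).2).1 = x ∧
      ∀ s ∈ Ioo (0:ℝ) t, 0 < (F s (Δ t x).1 (Δ t x).2).1

/-- The solution `u` of the conservation law built from the flow `F` and the map `Δ`
(extended by `0` at `x = 0`). -/
noncomputable def usol (F : ℝ → ℝ → ℝ → ℝ × ℝ) (Δ : ℝ → ℝ → ℝ × ℝ) (t x : ℝ) : ℝ :=
  if 0 < x then (F t (Δ t x).1 (Δ t x).2).2
  else if x < 0 then -(F t (Δ t (-x)).1 (Δ t (-x)).2).2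
  else 0


lemma aux_m (y : ℝ) : HasDerivAt (fun y : ℝ => (max y 0) ^ 4) (4 * (max y 0) ^ 3) y := by
  rcases lt_trichotomy y 0 with h | h | h
  · rw [max_eq_right h.le]
    have : HasDerivAt (fun _ : ℝ => (0:ℝ)) 0 y := hasDerivAt_const _ _
    have h4 : (4 * (0:ℝ) ^ 3) = 0 := by norm_num
    rw [h4]
    refine this.congr_of_eventuallyEq ?_
    filter_upwards [Iio_mem_nhds h] with z hz
    rw [max_eq_right (le_of_lt hz)]; norm_num
  · subst h
    rw [hasDerivAt_iff_tendsto_slope]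
    have hc : Tendsto (fun y : ℝ => (max y 0) ^ 3) (𝓝[≠] 0) (𝓝 (4 * (max (0:ℝ) 0) ^ 3)) := by
      have : Continuous (fun y : ℝ => (max y 0) ^ 3) := by fun_prop
      have h2 := this.tendsto 0
      simp only [max_self] at h2 ⊢
      norm_num at h2 ⊢
      exact h2.mono_left nhdsWithin_le_nhds
    refine hc.congr' ?_
    filter_upwards [self_mem_nhdsWithin] with z hz
    have hz' : z ≠ 0 := hz
    simp only [slope_def_field, max_self, sub_zero]
    rcases le_total z 0 with h | h
    · rw [max_eq_right h]; norm_num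
    · rw [max_eq_left h]; field_simp; norm_num
  · rw [max_eq_left h.le]
    have : HasDerivAt (fun z : ℝ => z ^ 4) (4 * y ^ 3) y := by
      simpa using hasDerivAt_pow 4 y
    refine this.congr_of_eventuallyEq ?_
    filter_upwards [Ioi_mem_nhds h] with z hz
    rw [max_eq_left (le_of_lt hz)]

lemma g_eq (x : ℝ) : g x = 1 - (max (1 - x ^ 2) 0) ^ 4 := by
  unfold g
  split_ifs with h
  · rw [max_eq_left]
    have := (sq_le_one_iff_abs_le_one x).2 h; linarith
  · rw [max_eq_right]
    · norm_num
    · have := (one_lt_sq_iff_one_lt_abs x).2 (not_le.1 h); linarith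

lemma g'_eq (x : ℝ) : g' x = 8 * x * (max (1 - x ^ 2) 0) ^ 3 := by
  unfold g'
  split_ifs with h
  · rw [max_eq_left]
    have := (sq_le_one_iff_abs_le_one x).2 h; linarith
  · rw [max_eq_right]
    · norm_num
    · have := (one_lt_sq_iff_one_lt_abs x).2 (not_le.1 h); linarith

lemma g_hasDeriv (x : ℝ) : HasDerivAt g (g' x) x := by
  have h1 : HasDerivAt (fun x : ℝ => 1 - x ^ 2) (-(2 * x)) x := by
    simpa using (hasDerivAt_pow 2 x).const_sub 1
  have h2 := ((aux_m (1 - x ^ 2)).comp x h1).const_sub 1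
  have : g = fun x => 1 - ((fun y : ℝ => (max y 0) ^ 4) ∘ fun x : ℝ => 1 - x ^ 2) x := by
    funext z; simp [g_eq]
  rw [this]
  refine h2.congr_deriv ?_
  rw [g'_eq]; ring

lemma g_nonneg (x : ℝ) : 0 ≤ g x := by
  rw [g_eq]
  have h0 : 0 ≤ max (1 - x ^ 2) 0 := le_max_right _ _
  have h1 : max (1 - x ^ 2) 0 ≤ 1 := max_le (by nlinarith [sq_nonneg x]) (by norm_num)
  have := pow_le_one₀ (n := 4) h0 h1
  linarith

lemma g_le_one (x : ℝ) : g x ≤ 1 := by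
  rw [g_eq]
  have : 0 ≤ (max (1 - x ^ 2) 0) ^ 4 := by positivity
  linarith

lemma g_zero : g 0 = 0 := by rw [g_eq]; norm_num

lemma g_one {x : ℝ} (h : 1 ≤ x) : g x = 1 := by
  rw [g_eq, max_eq_right (by nlinarith)]; norm_num

lemma g_mono {a b : ℝ} (ha : 0 ≤ a) (hab : a ≤ b) : g a ≤ g b := by
  rw [g_eq, g_eq]
  have : (max (1 - b ^ 2) 0) ^ 4 ≤ (max (1 - a ^ 2) 0) ^ 4 := by
    gcongr
  linarith

lemma g_strict {a b : ℝ} (ha : 0 ≤ a) (hab : a < b) (h1 : a < 1) : g a < g b := by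
  rw [g_eq, g_eq]
  have h2 : 0 < 1 - a ^ 2 := by nlinarith
  have : (max (1 - b ^ 2) 0) ^ 4 < (max (1 - a ^ 2) 0) ^ 4 := by
    apply pow_lt_pow_left₀ _ (le_max_right _ _) (by norm_num)
    rw [max_eq_left h2.le]
    exact max_lt (by nlinarith) h2
  linarith

lemma g'_sturm {a b : ℝ} (ha : 0 ≤ a) (hab : a ≤ b) : a * g' b ≤ b * g' a := by
  rw [g'_eq, g'_eq]
  have : (max (1 - b ^ 2) 0) ^ 3 ≤ (max (1 - a ^ 2) 0) ^ 3 := by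
    gcongr
  have h := mul_le_mul_of_nonneg_left this (show 0 ≤ 8 * (a * b) from mul_nonneg (by norm_num) (mul_nonneg ha (ha.trans hab)))
  linarith

lemma first_cross {d d' : ℝ → ℝ} (hd : ∀ s, HasDerivAt d (d' s) s)
    (h0 : 0 < d 0 ∨ (d 0 = 0 ∧ 0 < d' 0)) {t : ℝ} (ht : 0 < t) (hdt : d t ≤ 0) :
    ∃ τ, 0 < τ ∧ τ ≤ t ∧ d τ = 0 ∧ d' τ ≤ 0 ∧ ∀ s, 0 < s → s < τ → 0 < d s := by
  have hcont : Continuous d := continuous_iff_continuousAt.2 fun s => (hd s).continuousAt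
  have hev : ∀ᶠ s in 𝓝[>] (0:ℝ), 0 < d s := by
    rcases h0 with h | ⟨h, h'⟩
    · exact (hcont.continuousAt.eventually (lt_mem_nhds h)).filter_mono nhdsWithin_le_nhds
    · have hs := (hasDerivAt_iff_tendsto_slope.1 (hd 0)).eventually (lt_mem_nhds h')
      have hs' := hs.filter_mono (nhdsWithin_mono 0 (fun x (hx : 0 < x) => ne_of_gt hx))
      filter_upwards [hs', self_mem_nhdsWithin] with s h1 (h2 : 0 < s)
      rw [slope_def_field, h, sub_zero, sub_zero] at h1
      exact (div_pos_iff_of_pos_right h2).1 h1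
  obtain ⟨ε, hε, hεd⟩ := mem_nhdsGT_iff_exists_Ioo_subset.1 hev
  have hε0 : 0 < ε := hε
  have hεt : ε ≤ t := by
    by_contra hc
    have : 0 < d t := hεd ⟨ht, not_le.1 hc⟩
    linarith
  have hcomp : IsCompact (Icc (ε/2) t ∩ {s | d s ≤ 0}) :=
    isCompact_Icc.inter_right (isClosed_le hcont continuous_const)
  obtain ⟨τ, ⟨⟨hτ1, hτ2⟩, hτ3⟩, hτm⟩ := hcomp.exists_isLeast ⟨t, ⟨by linarith, le_rfl⟩, hdt⟩
  have hτ0 : 0 < τ := by linarith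
  have hpos : ∀ s, 0 < s → s < τ → 0 < d s := by
    intro s hs hsτ
    by_contra hc
    by_cases h : s < ε
    · exact hc (hεd ⟨hs, h⟩)
    · have := hτm ⟨⟨by linarith, by linarith⟩, not_lt.1 hc⟩
      linarith
  have hevl : ∀ᶠ s in 𝓝[<] τ, 0 < d s := by
    filter_upwards [Ioo_mem_nhdsLT hτ0] with s hs using hpos s hs.1 hs.2
  have hdτ : d τ = 0 := by
    refine le_antisymm hτ3 ?_
    exact ge_of_tendsto (hcont.continuousAt.tendsto.mono_left nhdsWithin_le_nhds)
      (hevl.mono fun s h => h.le)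
  refine ⟨τ, hτ0, hτ2, hdτ, ?_, hpos⟩
  have hs : Tendsto (slope d τ) (𝓝[<] τ) (𝓝 (d' τ)) :=
    (hasDerivAt_iff_tendsto_slope.1 (hd τ)).mono_left
    (nhdsWithin_mono τ (fun x (hx : x < τ) => ne_of_lt hx))
  refine le_of_tendsto hs ?_
  filter_upwards [hevl, self_mem_nhdsWithin] with s h1 (h2 : s < τ)
  rw [slope_def_field, hdτ, sub_zero]
  exact div_nonpos_of_nonneg_of_nonpos h1.le (by linarith)

lemma energy {q p : ℝ → ℝ} (h : IsHSSol q p) (t : ℝ) :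
    p t ^ 2 / 2 + g (q t) = p 0 ^ 2 / 2 + g (q 0) := by
  have hd : ∀ s, HasDerivAt (fun s => p s ^ 2 / 2 + g (q s)) 0 s := by
    intro s
    have h1 := ((h.2 s).pow 2).div_const 2
    have h2 := (g_hasDeriv (q s)).comp s (h.1 s)
    have h3 := h1.add h2
    refine h3.congr_deriv ?_
    push_cast
    ring
  exact is_const_of_deriv_eq_zero (fun s => (hd s).differentiableAt) (fun s => (hd s).deriv) t 0

lemma p_pos {q p : ℝ → ℝ} (h : IsHSSol q p) (h0 : p 0 = 2) (t : ℝ) : 0 < p t := by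
  have hcont : Continuous p := continuous_iff_continuousAt.2 fun s => (h.2 s).continuousAt
  by_contra hc
  obtain ⟨s, -, hs⟩ := intermediate_value_uIcc (a := t) (b := 0) (f := p) hcont.continuousOn
    (show (0:ℝ) ∈ uIcc (p t) (p 0) from by
      rw [h0, mem_uIcc]; left; exact ⟨not_lt.1 hc, by norm_num⟩)
  have := energy h s
  rw [hs, h0] at this
  have h1 := g_le_one (q s)
  have h2 := g_nonneg (q 0)
  norm_num at this
  linarith

lemma p_two {q p : ℝ → ℝ} (h : IsHSSol q p) (h0 : p 0 = 2) (hq : 1 ≤ q 0) {t : ℝ} (ht : 0 ≤ t) :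
    p t = 2 := by
  have hm : Monotone q := monotone_of_deriv_nonneg (fun s => (h.1 s).differentiableAt)
    (fun s => by rw [(h.1 s).deriv]; exact (p_pos h h0 s).le)
  have h1 : 1 ≤ q t := hq.trans (hm ht)
  have := energy h t
  rw [g_one h1, g_one hq, h0] at this
  have h2 := p_pos h h0 t
  nlinarith

lemma compare {q₁ p₁ q₂ p₂ : ℝ → ℝ} (h₁ : IsHSSol q₁ p₁) (h₂ : IsHSSol q₂ p₂)
    {θ₁ θ₂ : ℝ} (hθ : θ₁ < θ₂) (hθ2 : -2 < θ₁)
    (hq₁ : q₁ 0 = max θ₁ 0) (hp₁ : p₁ 0 = 2 + min θ₁ 0)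
    (hq₂ : q₂ 0 = max θ₂ 0) (hp₂ : p₂ 0 = 2 + min θ₂ 0)
    {t : ℝ} (ht : 0 < t) (hpos : ∀ s, 0 < s → s ≤ t → 0 < q₁ s) : q₁ t < q₂ t := by
  by_contra hc
  have hd : ∀ s, HasDerivAt (fun s => q₂ s - q₁ s) ((fun s => p₂ s - p₁ s) s) s :=
    fun s => (h₂.1 s).sub (h₁.1 s)
  have e1 := energy h₁
  have e2 := energy h₂
  rcases lt_or_ge 0 θ₂ with h | h
  · rw [max_eq_left h.le] at hq₂
    rw [min_eq_right h.le, add_zero] at hp₂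
    obtain ⟨τ, hτ0, hτt, hdτ, hd'τ, -⟩ := first_cross hd
      (Or.inl (by simp only [hq₁, hq₂]; exact sub_pos.2 (max_lt hθ h))) ht
        (by simpa using hc)
    have hqe : q₂ τ = q₁ τ := by linarith
    have hp := p_pos h₂ hp₂ τ
    have e1 := e1 τ
    have e2 := e2 τ
    rw [hqe, hq₂, hp₂] at e2
    rw [hq₁, hp₁] at e1
    have hsq : p₂ τ ^ 2 ≤ p₁ τ ^ 2 := by nlinarith
    rcases lt_or_ge θ₁ 0 with h' | h'
    · rw [max_eq_right h'.le, min_eq_left h'.le, g_zero] at e1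
      have := g_nonneg θ₂
      nlinarith
    · rw [max_eq_left h', min_eq_right h'] at e1
      have h1 : 1 ≤ θ₁ := by
        by_contra h1
        have := g_strict h' hθ (not_le.1 h1)
        nlinarith
      rw [max_eq_left h'] at hq₁
      rw [min_eq_right h', add_zero] at hp₁
      obtain ⟨c, hc, hce⟩ := exists_hasDerivAt_eq_slope (fun s => q₂ s - q₁ s)
        (fun s => p₂ s - p₁ s) hτ0 (fun s _ => (hd s).continuousAt.continuousWithinAt)
        (fun s _ => hd s)
      simp only [hdτ, hq₁, hq₂] at hce
      rw [p_two h₁ hp₁ (by rw [hq₁]; exact h1) hc.1.le,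
        p_two h₂ hp₂ (by rw [hq₂]; linarith) hc.1.le] at hce
      have h3 : (0 - (θ₂ - θ₁)) / (τ - 0) < 0 :=
        div_neg_of_neg_of_pos (by linarith) (by linarith)
      linarith
  · have h' : θ₁ ≤ 0 := by linarith
    rw [max_eq_right h] at hq₂
    rw [min_eq_left h] at hp₂
    rw [max_eq_right h'] at hq₁
    rw [min_eq_left h'] at hp₁
    obtain ⟨τ, hτ0, hτt, hdτ, hd'τ, hdpos⟩ := first_cross hd
      (Or.inr (by simp only [hq₁, hq₂, hp₁, hp₂]; constructor <;> linarith)) ht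
        (by simpa using hc)
    have hqe : q₂ τ = q₁ τ := by linarith
    have hW : ∀ s, HasDerivAt (fun s => q₁ s * p₂ s - q₂ s * p₁ s)
        (q₂ s * g' (q₁ s) - q₁ s * g' (q₂ s)) s := by
      intro s
      refine (((h₁.1 s).mul (h₂.2 s)).sub ((h₂.1 s).mul (h₁.2 s))).congr_deriv ?_
      ring
    have hmono : MonotoneOn (fun s => q₁ s * p₂ s - q₂ s * p₁ s) (Icc 0 τ) := by
      apply monotoneOn_of_deriv_nonneg (convex_Icc 0 τ)
      · exact fun s _ => (hW s).continuousAt.continuousWithinAt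
      · exact fun s _ => (hW s).differentiableAt.differentiableWithinAt
      · intro s hs
        rw [interior_Icc] at hs
        rw [(hW s).deriv]
        have := g'_sturm (hpos s hs.1 (by linarith [hs.2])).le
          (show q₁ s ≤ q₂ s by linarith [hdpos s hs.1 hs.2])
        linarith
    have hW2 := hmono ⟨le_rfl, hτ0.le⟩ ⟨hτ0.le, le_rfl⟩ hτ0.le
    simp only [hq₁, hq₂, hqe] at hW2
    have hqp := hpos τ hτ0 hτt
    have hpp : p₁ τ ≤ p₂ τ := by
      by_contra hcc
      nlinarith
    have hpe : p₁ τ = p₂ τ := by linarith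
    have e1 := e1 τ
    have e2 := e2 τ
    rw [hqe, hq₂, hp₂] at e2
    rw [hq₁, hp₁, hpe] at e1
    nlinarith

lemma Dset_param {z : ℝ × ℝ} (hz : z ∈ Dset) :
    -2 < z.1 + z.2 - 2 ∧ z.1 = max (z.1 + z.2 - 2) 0 ∧ z.2 = 2 + min (z.1 + z.2 - 2) 0 := by
  obtain ⟨a, b⟩ := z
  simp only [Dset, mem_union, mem_prod, mem_Ici, mem_singleton_iff, mem_Ioc] at hz ⊢
  rcases hz with ⟨h1, rfl⟩ | ⟨rfl, h1, h2⟩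
  · refine ⟨by linarith, ?_, ?_⟩
    · rw [max_eq_left] <;> linarith
    · rw [min_eq_right] <;> linarith
  · refine ⟨by linarith, ?_, ?_⟩
    · rw [max_eq_right]; linarith
    · rw [min_eq_left] <;> linarith

/-- position at time t, with parameter θ -/
def Phi (F : ℝ → ℝ → ℝ → ℝ × ℝ) (θ t : ℝ) : ℝ := (F t (max θ 0) (2 + min θ 0)).1

lemma Phi_cont {F : ℝ → ℝ → ℝ → ℝ × ℝ} (hF : IsHSFlow F) (θ : ℝ) : Continuous (Phi F θ) :=
  continuous_iff_continuousAt.2 fun s => ((hF _ _).1.1 s).continuousAt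

lemma Phi_zero {F : ℝ → ℝ → ℝ → ℝ × ℝ} (hF : IsHSFlow F) (θ : ℝ) : Phi F θ 0 = max θ 0 := by
  unfold Phi; rw [(hF _ _).2]

lemma Phi_lt {F : ℝ → ℝ → ℝ → ℝ × ℝ} (hF : IsHSFlow F) {θ₁ θ₂ t : ℝ} (hθ2 : -2 < θ₁)
    (hθ : θ₁ < θ₂) (ht : 0 < t) (hpos : ∀ s, 0 < s → s ≤ t → 0 < Phi F θ₁ s) :
    Phi F θ₁ t < Phi F θ₂ t := by
  have a1 := (hF (max θ₁ 0) (2 + min θ₁ 0)).2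
  have a2 := (hF (max θ₂ 0) (2 + min θ₂ 0)).2
  exact compare (hF _ _).1 (hF _ _).1 hθ hθ2 (by simp only [a1]) (by simp only [a1])
    (by simp only [a2]) (by simp only [a2]) ht hpos

lemma Phi_le {F : ℝ → ℝ → ℝ → ℝ × ℝ} (hF : IsHSFlow F) {θ₁ θ₂ t : ℝ} (hθ2 : -2 < θ₁)
    (hθ : θ₁ ≤ θ₂) (ht : 0 < t) (hpos : ∀ s, 0 < s → s ≤ t → 0 < Phi F θ₁ s) :
    Phi F θ₁ t ≤ Phi F θ₂ t := by
  rcases hθ.eq_or_lt with rfl | h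
  · exact le_rfl
  · exact (Phi_lt hF hθ2 h ht hpos).le

lemma Delta_param {F : ℝ → ℝ → ℝ → ℝ × ℝ} {Δ : ℝ → ℝ → ℝ × ℝ}
    (hΔ : IsDeltaMap F Δ) {t x : ℝ} (ht : 0 < t) (hx : 0 < x) :
    ∃ θ, θ = (Δ t x).1 + (Δ t x).2 - 2 ∧ -2 < θ ∧ Δ t x = (max θ 0, 2 + min θ 0) ∧
      Phi F θ t = x ∧ ∀ s, 0 < s → s ≤ t → 0 < Phi F θ s := by
  obtain ⟨h1, h2, h3⟩ := hΔ t x ht hx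
  obtain ⟨h4, h5, h6⟩ := Dset_param h1
  generalize hθ : (Δ t x).1 + (Δ t x).2 - 2 = θ at *
  have hP : Phi F θ t = x := by unfold Phi; rw [← h5, ← h6]; exact h2
  refine ⟨θ, rfl, h4, Prod.ext h5 h6, hP, ?_⟩
  intro s hs hst
  rcases hst.eq_or_lt with rfl | h
  · rw [hP]; exact hx
  · unfold Phi; rw [← h5, ← h6]; exact h3 s ⟨hs, h⟩

/-- Lemma ce5, properties of `Δ`: (i) `Δ` is continuous on `(0,∞)²`; (ii) `Δ` is monotone:
if `Δ(t₀,x₀) = (0,p₀)`, `Δ(t₀,x₀') = (0,p₀')` and `0 < x₀ < x₀'` then `p₀ < p₀'`;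
(iii) for every `x > 0`, `Δ(t,x) → (x,2)` as `t → 0⁺`. -/
theorem stmt_9 (F : ℝ → ℝ → ℝ → ℝ × ℝ) (hF : IsHSFlow F)
    (Δ : ℝ → ℝ → ℝ × ℝ) (hΔ : IsDeltaMap F Δ) :
    ContinuousOn (fun z : ℝ × ℝ => Δ z.1 z.2) (Ioi 0 ×ˢ Ioi 0) ∧
    (∀ t₀ x₀ x₀' p₀ p₀' : ℝ, 0 < t₀ → 0 < x₀ → x₀ < x₀' →
      Δ t₀ x₀ = (0, p₀) → Δ t₀ x₀' = (0, p₀') → p₀ < p₀') ∧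
    (∀ x : ℝ, 0 < x →
      Tendsto (fun t => Δ t x) (𝓝[>] 0) (𝓝 (x, 2))) := by
  have hcurve : Continuous (fun θ : ℝ => ((max θ 0, 2 + min θ 0) : ℝ × ℝ)) := by fun_prop
  refine ⟨?_, ?_, ?_⟩
  · rintro ⟨t₀, x₀⟩ ⟨ht₀ : 0 < t₀, hx₀ : 0 < x₀⟩
    apply ContinuousAt.continuousWithinAt
    have hpos : ∀ᶠ z : ℝ × ℝ in 𝓝 (t₀, x₀), 0 < z.1 ∧ 0 < z.2 :=
      (continuous_fst.continuousAt.eventually (lt_mem_nhds ht₀)).and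
        (continuous_snd.continuousAt.eventually (lt_mem_nhds hx₀))
    obtain ⟨θ₀, hθ₀, hθ₀2, hΔ₀, hP₀, hpos₀⟩ := Delta_param hΔ ht₀ hx₀
    have key : Tendsto (fun z : ℝ × ℝ => (Δ z.1 z.2).1 + (Δ z.1 z.2).2 - 2)
        (𝓝 (t₀, x₀)) (𝓝 θ₀) := by
      have hcP : ∀ θ, Continuous (fun z : ℝ × ℝ => Phi F θ z.1 - z.2) := fun θ =>
        ((Phi_cont hF θ).comp continuous_fst).sub continuous_snd
      rw [tendsto_order]
      constructor
      · intro θ₁ hθ₁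
        by_cases hp : ∃ s, 0 < s ∧ s < t₀ ∧ Phi F θ₁ s ≤ 0
        · obtain ⟨s, hs, hst, hsP⟩ := hp
          filter_upwards [hpos, continuous_fst.continuousAt.eventually
            (lt_mem_nhds (show s < (t₀, x₀).1 from hst))] with z hz hz2
          obtain ⟨θ, hθ, hθ2, -, hP, hps⟩ := Delta_param hΔ hz.1 hz.2
          rw [← hθ]
          by_contra hc
          have := Phi_le hF hθ2 (not_lt.1 hc) hs (fun r hr hrs => hps r hr (by linarith))
          have := hps s hs hz2.le
          linarith
        · push Not at hp
          by_cases h2 : -2 < θ₁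
          · have hlt : Phi F θ₁ t₀ - x₀ < 0 := by
              by_contra hc
              have := Phi_lt hF h2 hθ₁ ht₀ (fun s hs hst => by
                rcases hst.eq_or_lt with rfl | h
                · linarith
                · exact hp s hs h)
              linarith
            filter_upwards [hpos, (hcP θ₁).continuousAt.eventually
              (gt_mem_nhds (show Phi F θ₁ (t₀, x₀).1 - (t₀, x₀).2 < 0 from hlt))] with z hz hz2
            obtain ⟨θ, hθ, hθ2, -, hP, hps⟩ := Delta_param hΔ hz.1 hz.2
            rw [← hθ]
            by_contra hc
            have := Phi_le hF hθ2 (not_lt.1 hc) hz.1 hps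
            linarith
          · filter_upwards [hpos] with z hz
            obtain ⟨θ, hθ, hθ2, -, hP, hps⟩ := Delta_param hΔ hz.1 hz.2
            rw [← hθ]
            linarith
      · intro θ₂ hθ₂
        have hlt : 0 < Phi F θ₂ t₀ - x₀ := by
          have := Phi_lt hF hθ₀2 hθ₂ ht₀ hpos₀
          linarith
        have hps₂ : ∀ s, 0 < s → s ≤ t₀ → 0 < Phi F θ₂ s := fun s hs hst =>
          (hpos₀ s hs hst).trans (Phi_lt hF hθ₀2 hθ₂ hs (fun r hr hrs => hpos₀ r hr (by linarith)))
        obtain ⟨δ, hδ, hδP⟩ := Metric.eventually_nhds_iff.1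
          ((Phi_cont hF θ₂).continuousAt.eventually (lt_mem_nhds (hps₂ t₀ ht₀ le_rfl)))
        filter_upwards [hpos, (hcP θ₂).continuousAt.eventually
          (lt_mem_nhds (show 0 < Phi F θ₂ (t₀, x₀).1 - (t₀, x₀).2 from hlt)),
          continuous_fst.continuousAt.eventually
            (gt_mem_nhds (show (t₀, x₀).1 < t₀ + δ by simpa using hδ))] with z hz hz2 hz3
        obtain ⟨θ, hθ, hθ2, -, hP, hps⟩ := Delta_param hΔ hz.1 hz.2
        rw [← hθ]
        by_contra hc
        have := Phi_le hF (by linarith) (not_lt.1 hc) hz.1 (fun s hs hst => by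
          by_cases h : s ≤ t₀
          · exact hps₂ s hs h
          · apply hδP
            rw [Real.dist_eq, abs_lt]
            constructor <;> linarith)
        linarith
    have h1 := (hcurve.tendsto θ₀).comp key
    rw [← hΔ₀] at h1
    refine h1.congr' ?_
    filter_upwards [hpos] with z hz
    obtain ⟨θ, hθ, hθ2, hD, -, -⟩ := Delta_param hΔ hz.1 hz.2
    simp only [Function.comp, ← hθ]
    exact hD.symm
  · intro t₀ x₀ x₀' p₀ p₀' ht hx hxx h1 h2
    obtain ⟨θ, hθ, hθ2, -, hP, hps⟩ := Delta_param hΔ ht hx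
    obtain ⟨θ', hθ', hθ2', -, hP', hps'⟩ := Delta_param hΔ ht (hx.trans hxx)
    rw [h1] at hθ
    rw [h2] at hθ'
    simp only at hθ hθ'
    by_contra hc
    have := Phi_le hF hθ2' (show θ' ≤ θ by linarith) ht hps'
    linarith
  · intro x hx
    have key : Tendsto (fun t => (Δ t x).1 + (Δ t x).2 - 2) (𝓝[>] 0) (𝓝 x) := by
      rw [tendsto_order]
      constructor
      · intro θ₁ hθ₁
        filter_upwards [self_mem_nhdsWithin, ((Phi_cont hF θ₁).continuousAt.eventually
          (gt_mem_nhds (show Phi F θ₁ 0 < x by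
            rw [Phi_zero hF]; exact max_lt hθ₁ hx))).filter_mono nhdsWithin_le_nhds]
          with t (ht : 0 < t) ht2
        obtain ⟨θ, hθ, hθ2, -, hP, hps⟩ := Delta_param hΔ ht hx
        rw [← hθ]
        by_contra hc
        have := Phi_le hF hθ2 (not_lt.1 hc) ht hps
        linarith
      · intro θ₂ hθ₂
        have hM : Phi F θ₂ 0 = θ₂ := by rw [Phi_zero hF, max_eq_left (by linarith)]
        obtain ⟨δ, hδ, hδP⟩ := Metric.eventually_nhds_iff.1
          ((Phi_cont hF θ₂).continuousAt.eventually (lt_mem_nhds (show x < Phi F θ₂ 0 by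
            rw [hM]; exact hθ₂)))
        filter_upwards [Ioo_mem_nhdsGT hδ] with t ht
        obtain ⟨θ, hθ, hθ2, -, hP, hps⟩ := Delta_param hΔ ht.1 hx
        rw [← hθ]
        by_contra hc
        have hgt : ∀ s, 0 < s → s ≤ t → x < Phi F θ₂ s := fun s hs hst => by
          apply hδP
          rw [Real.dist_eq, abs_lt]
          constructor <;> linarith [ht.2]
        have := Phi_le hF (by linarith) (not_lt.1 hc) ht.1
          (fun s hs hst => hx.trans (hgt s hs hst))
        have := hgt t ht.1 le_rfl
        linarith
    have h1 := (hcurve.tendsto x).comp key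
    simp only [max_eq_left hx.le, min_eq_right hx.le, add_zero] at h1
    refine h1.congr' ?_
    filter_upwards [self_mem_nhdsWithin] with t (ht : 0 < t)
    obtain ⟨θ, hθ, hθ2, hD, -, -⟩ := Delta_param hΔ ht hx
    simp only [Function.comp, ← hθ]
    exact hD.symm
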